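/- arXiv:2402.05682 — 2 statements merged into one kernel-verified Lean document; each statement's English description precedes it below -/
import Mathlib

section
/- The cross product of paths satisfies the Leibniz rule: for u ∈ Ω_p(X;ℤ) and v ∈ Ω_q(Y;ℤ), one has u × v ∈ Ω_{p+q}(X ⊡ Y;ℤ) and ∂(u × v) = (∂u) × v + (-1)^p u × (∂v). -/
/-- The boundary operator on the free ℤ-module generated by elementary paths (encoded as lists
of vertices): `∂ e_{i₀…i_n} = Σ_j (-1)^j e_{i₀…î_j…i_n}` for paths of length ≥ 1, and `∂ = 0`
on paths of length 0. -/
noncomputable def bdry (V : Type*) : (List V →₀ ℤ) →ₗ[ℤ] (List V →₀ ℤ) :=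
  Finsupp.lsum ℤ fun l => LinearMap.toSpanSingleton ℤ _
    (if 2 ≤ l.length then
      ∑ j ∈ Finset.range l.length, (-1 : ℤ) ^ j • Finsupp.single (l.eraseIdx j) (1 : ℤ)
    else 0)

/-- `u` is a ℤ-linear combination of strongly regular allowed elementary `n`-paths in the
digraph with adjacency `adj` (allowed: consecutive vertices joined by an edge; strongly
regular: all vertices pairwise distinct), i.e. `u ∈ A_n(G;ℤ)`. -/
def IsA {V : Type*} (adj : V → V → Prop) (n : ℕ) (u : List V →₀ ℤ) : Prop :=
  ∀ l ∈ u.support, l.length = n + 1 ∧ l.Chain' adj ∧ l.Nodup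

/-- `u ∈ Ω_n(G;ℤ)`: `u ∈ A_n(G;ℤ)` and `∂u ∈ A_{n-1}(G;ℤ)`. -/
def IsOmega {V : Type*} (adj : V → V → Prop) (n : ℕ) (u : List V →₀ ℤ) : Prop :=
  IsA adj n u ∧ IsA adj (n - 1) (bdry V u)
/-- The Cartesian product digraph: `(v,w) → (v',w')` iff `v = v'` and `w → w'`, or `v → v'` and
`w = w'`. -/
def prodAdj {X Y : Type*} (adjX : X → X → Prop) (adjY : Y → Y → Prop) :
    X × Y → X × Y → Prop :=
  fun a b => (a.1 = b.1 ∧ adjY a.2 b.2) ∨ (adjX a.1 b.1 ∧ a.2 = b.2)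

/-- The cross product of two elementary paths (as lists of vertices):
`e_x × e_y = Σ_{z stair-like} (-1)^{L(z)} e_z`, where `L(z)` is the number of grid cells below
the staircase of `z`.  Defined recursively on the first step of the merge; taking a `y`-step
first multiplies by `(-1)^{#remaining x-steps}` as each remaining `x`-step acquires one more
cell below it. -/
noncomputable def cross {X Y : Type*} : List X → List Y → (List (X × Y) →₀ ℤ)
  | [], _ => 0
  | _ :: _, [] => 0
  | [a], b :: ys => Finsupp.single ((b :: ys).map (fun t => (a, t))) 1
  | a :: a2 :: xs, [b] => Finsupp.single ((a :: a2 :: xs).map (fun s => (s, b))) 1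
  | a :: a2 :: xs, b :: b2 :: ys =>
      Finsupp.mapDomain (List.cons (a, b)) (cross (a2 :: xs) (b :: b2 :: ys)) +
      ((-1 : ℤ) ^ (xs.length + 1)) •
        Finsupp.mapDomain (List.cons (a, b)) (cross (a :: a2 :: xs) (b2 :: ys))
termination_by x y => x.length + y.length
decreasing_by all_goals simp <;> omega

/-- The bilinear extension of the cross product to ℤ-linear combinations of paths. -/
noncomputable def crossF {X Y : Type*} (u : List X →₀ ℤ) (v : List Y →₀ ℤ) :
    List (X × Y) →₀ ℤ :=
  u.sum fun x cx => v.sum fun y cy => (cx * cy) • cross x y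

/-- Linear prepending of a vertex. -/
noncomputable def consL {V : Type*} (a : V) : (List V →₀ ℤ) →ₗ[ℤ] (List V →₀ ℤ) :=
  Finsupp.lmapDomain ℤ ℤ (List.cons a)

theorem consL_single {V : Type*} (a : V) (l : List V) (c : ℤ) :
    consL a (Finsupp.single l c) = Finsupp.single (a :: l) c := by
  simp [consL]

/-- Augmented simplicial boundary on lists. -/
noncomputable def augD {V : Type*} : List V → (List V →₀ ℤ)
  | [] => 0
  | a :: l => Finsupp.single l 1 - consL a (augD l)

/-- Linear extension of `augD`. -/
noncomputable def augL (V : Type*) : (List V →₀ ℤ) →ₗ[ℤ] (List V →₀ ℤ) :=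
  Finsupp.linearCombination ℤ augD

theorem augL_single {V : Type*} (l : List V) : augL V (Finsupp.single l 1) = augD l := by
  simp [augL]

theorem augL_consL {V : Type*} (a : V) (w : List V →₀ ℤ) :
    augL V (consL a w) = w - consL a (augL V w) := by
  induction w using Finsupp.induction_linear with
  | zero => simp
  | add f g hf hg => simp only [map_add, hf, hg]; abel
  | single l c =>
    rw [consL_single]
    simp only [augL, Finsupp.linearCombination_single, augD, map_smul, smul_sub]
    simp

theorem augD_eq_sum {V : Type*} (l : List V) :
    augD l = ∑ j ∈ Finset.range l.length,
      (-1 : ℤ) ^ j • Finsupp.single (l.eraseIdx j) (1 : ℤ) := by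
  induction l with
  | nil => simp [augD]
  | cons a l ih =>
    rw [augD, ih, List.length_cons, Finset.sum_range_succ', map_sum, sub_eq_add_neg, add_comm,
      ← Finset.sum_neg_distrib]
    congr 1
    · apply Finset.sum_congr rfl
      intro j _
      rw [map_smul, consL_single, List.eraseIdx_cons_succ, pow_succ]
      simp
    · simp

theorem bdry_single {V : Type*} (l : List V) :
    bdry V (Finsupp.single l 1) = if 2 ≤ l.length then augD l else 0 := by
  rw [augD_eq_sum]
  simp [bdry]

/-- Chains supported on lists satisfying a predicate. -/
noncomputable def supp {V : Type*} (P : List V → Prop) : Submodule ℤ (List V →₀ ℤ) :=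
  Finsupp.supported ℤ ℤ {l | P l}

theorem mem_supp {V : Type*} {P : List V → Prop} {u : List V →₀ ℤ} :
    u ∈ supp P ↔ ∀ l ∈ u.support, P l := by
  simp only [supp, Finsupp.mem_supported]
  rfl

theorem single_mem_supp {V : Type*} {P : List V → Prop} {l : List V} (h : P l) (c : ℤ) :
    Finsupp.single l c ∈ supp P :=
  Finsupp.single_mem_supported ℤ c h

/-- Two linear maps that agree on generators agree on `supp P`. -/
theorem supp_ext {V M : Type*} [AddCommGroup M] {P : List V → Prop}
    (f g : (List V →₀ ℤ) →ₗ[ℤ] M)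
    (h : ∀ l, P l → f (Finsupp.single l 1) = g (Finsupp.single l 1))
    {u : List V →₀ ℤ} (hu : u ∈ supp P) : f u = g u := by
  rw [supp, Finsupp.supported_eq_span_single] at hu
  refine LinearMap.eqOn_span (s := (fun i => Finsupp.single i (1 : ℤ)) '' {l | P l}) ?_ hu
  rintro _ ⟨l, hl, rfl⟩
  exact h l hl

/-- Mapping generators of `supp P` into a submodule. -/
theorem supp_map {V M : Type*} [AddCommGroup M] {P : List V → Prop}
    (f : (List V →₀ ℤ) →ₗ[ℤ] M) (N : Submodule ℤ M)
    (h : ∀ l, P l → f (Finsupp.single l 1) ∈ N)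
    {u : List V →₀ ℤ} (hu : u ∈ supp P) : f u ∈ N := by
  rw [supp, Finsupp.supported_eq_span_single] at hu
  have : Submodule.span ℤ ((fun i => Finsupp.single i (1 : ℤ)) '' {l | P l}) ≤ N.comap f := by
    rw [Submodule.span_le]
    rintro _ ⟨l, hl, rfl⟩
    exact h l hl
  exact this hu

theorem consL_mem {V : Type*} {P Q : List V → Prop} (a : V) (h : ∀ l, P l → Q (a :: l))
    {u : List V →₀ ℤ} (hu : u ∈ supp P) : consL a u ∈ supp Q := by
  refine supp_map _ _ (fun l hl => ?_) hu
  rw [consL_single]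
  exact single_mem_supp (h l hl) 1

theorem augD_mem {V : Type*} (l : List V) : augD l ∈ supp (fun z => z.length + 1 = l.length) := by
  induction l with
  | nil => simp [augD]
  | cons a l ih =>
    refine Submodule.sub_mem _ (single_mem_supp (by simp) 1) (consL_mem a (fun z hz => ?_) ih)
    simp [hz]

theorem bdry_eq_augL {V : Type*} {u : List V →₀ ℤ} (hu : u ∈ supp (fun l => 2 ≤ l.length)) :
    bdry V u = augL V u := by
  refine supp_ext _ _ (fun l hl => ?_) hu
  rw [bdry_single, augL_single, if_pos hl]

/-- Bilinear version of the cross product. -/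
noncomputable def crossB (X Y : Type*) :
    (List X →₀ ℤ) →ₗ[ℤ] (List Y →₀ ℤ) →ₗ[ℤ] (List (X × Y) →₀ ℤ) :=
  Finsupp.linearCombination ℤ (fun x => Finsupp.linearCombination ℤ (cross x))

theorem crossB_single {X Y : Type*} (x : List X) (y : List Y) :
    crossB X Y (Finsupp.single x 1) (Finsupp.single y 1) = cross x y := by
  simp [crossB]

theorem crossF_eq {X Y : Type*} (u : List X →₀ ℤ) (v : List Y →₀ ℤ) :
    crossF u v = crossB X Y u v := by
  simp only [crossF, crossB, Finsupp.linearCombination_apply, Finsupp.sum,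
    LinearMap.sum_apply, LinearMap.smul_apply, Finset.smul_sum, smul_smul]

theorem cross_nil_right {X Y : Type*} (x : List X) : cross x ([] : List Y) = 0 := by
  cases x <;> simp [cross]

theorem cross_nil_left {X Y : Type*} (y : List Y) : cross ([] : List X) y = 0 := by
  simp [cross]

theorem cross_singleton_left {X Y : Type*} (a : X) {y : List Y} (hy : y ≠ []) :
    cross [a] y = Finsupp.single (y.map (fun t => (a, t))) 1 := by
  cases y with
  | nil => exact absurd rfl hy
  | cons b ys => simp [cross]

theorem cross_singleton_right {X Y : Type*} (b : Y) {x : List X} (hx : x ≠ []) :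
    cross x [b] = Finsupp.single (x.map (fun t => (t, b))) 1 := by
  match x, hx with
  | [a], _ => simp [cross]
  | a :: a2 :: xs, _ => simp [cross]

/-- The uniform recursion for the cross product. -/
theorem cross_cons {X Y : Type*} (a : X) (b : Y) (x : List X) (y : List Y)
    (h : x ≠ [] ∨ y ≠ []) :
    cross (a :: x) (b :: y) = consL (a, b) (cross x (b :: y)) +
      (-1 : ℤ) ^ x.length • consL (a, b) (cross (a :: x) y) := by
  match x, y, h with
  | [], b2 :: ys, _ => simp [cross, consL_single]
  | a2 :: xs, [], _ =>
    rw [cross_singleton_right b (by simp), cross_singleton_right b (by simp), cross_nil_right,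
      consL_single]
    simp
  | a2 :: xs, b2 :: ys, _ =>
    rw [cross]
    rfl

theorem crossB_consL_left {X Y : Type*} (a : X) (b : Y) (n : ℕ) (y : List Y) (hy : y ≠ [])
    {w : List X →₀ ℤ} (hw : w ∈ supp (fun l => l.length = n)) :
    crossB X Y (consL a w) (Finsupp.single (b :: y) 1) =
      consL (a, b) (crossB X Y w (Finsupp.single (b :: y) 1)) +
      (-1 : ℤ) ^ n • consL (a, b) (crossB X Y (consL a w) (Finsupp.single y 1)) := by
  refine supp_ext (((crossB X Y).flip (Finsupp.single (b :: y) 1)).comp (consL a))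
    ((consL (a, b)).comp ((crossB X Y).flip (Finsupp.single (b :: y) 1)) +
      (-1 : ℤ) ^ n • (consL (a, b)).comp
        (((crossB X Y).flip (Finsupp.single y 1)).comp (consL a))) (fun l hl => ?_) hw
  simp only [LinearMap.add_apply, LinearMap.smul_apply, LinearMap.comp_apply,
    LinearMap.flip_apply, consL_single, crossB_single]
  rw [cross_cons a b l y (Or.inr hy), hl]

theorem crossB_consL_right {X Y : Type*} (a : X) (b : Y) (x : List X) (hx : x ≠ [])
    (w : List Y →₀ ℤ) :
    crossB X Y (Finsupp.single (a :: x) 1) (consL b w) =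
      consL (a, b) (crossB X Y (Finsupp.single x 1) (consL b w)) +
      (-1 : ℤ) ^ x.length • consL (a, b) (crossB X Y (Finsupp.single (a :: x) 1) w) := by
  refine supp_ext (P := fun _ => True) ((crossB X Y (Finsupp.single (a :: x) 1)).comp (consL b))
    ((consL (a, b)).comp ((crossB X Y (Finsupp.single x 1)).comp (consL b)) +
      (-1 : ℤ) ^ x.length • (consL (a, b)).comp
        (crossB X Y (Finsupp.single (a :: x) 1))) (fun l _ => ?_) (mem_supp.2 (by simp))
  simp only [LinearMap.add_apply, LinearMap.smul_apply, LinearMap.comp_apply,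
    consL_single, crossB_single]
  rw [cross_cons a b x l (Or.inl hx)]

theorem augD_map {V W : Type*} (f : V → W) (l : List V) :
    augD (l.map f) = Finsupp.mapDomain (List.map f) (augD l) := by
  simp only [augD_eq_sum, List.length_map, Finsupp.mapDomain_finset_sum, Finsupp.mapDomain_smul,
    Finsupp.mapDomain_single, List.eraseIdx_map]

theorem augL_singleton_left {X Y : Type*} (a : X) {y : List Y} (hy : 2 ≤ y.length) :
    augL (X × Y) (cross [a] y) = crossB X Y (Finsupp.single [a] 1) (augD y) := by
  have hne : y ≠ [] := by rintro rfl; simp at hy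
  rw [cross_singleton_left a hne, augL_single, augD_map]
  refine supp_ext (Finsupp.lmapDomain ℤ ℤ (List.map fun t => (a, t)))
    (crossB X Y (Finsupp.single [a] 1)) (fun l hl => ?_) (augD_mem y)
  have hl' : l ≠ [] := by rintro rfl; simp at hl; omega
  rw [crossB_single, cross_singleton_left a hl']
  simp

theorem augL_singleton_right {X Y : Type*} (b : Y) {x : List X} (hx : 2 ≤ x.length) :
    augL (X × Y) (cross x [b]) = crossB X Y (augD x) (Finsupp.single [b] 1) := by
  have hne : x ≠ [] := by rintro rfl; simp at hx
  rw [cross_singleton_right b hne, augL_single, augD_map]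
  refine supp_ext (Finsupp.lmapDomain ℤ ℤ (List.map fun t => (t, b)))
    ((crossB X Y).flip (Finsupp.single [b] 1)) (fun l hl => ?_) (augD_mem x)
  have hl' : l ≠ [] := by rintro rfl; simp at hl; omega
  rw [LinearMap.flip_apply, crossB_single, cross_singleton_right b hl']
  simp

theorem crossB_nil_left {X Y : Type*} (v : List Y →₀ ℤ) :
    crossB X Y (Finsupp.single [] 1) v = 0 :=
  supp_ext (P := fun _ => True) (crossB X Y (Finsupp.single [] 1)) 0
    (fun l _ => by rw [crossB_single, cross_nil_left]; rfl) (mem_supp.2 (by simp))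

theorem crossB_nil_right {X Y : Type*} (u : List X →₀ ℤ) :
    crossB X Y u (Finsupp.single [] 1) = 0 :=
  supp_ext (P := fun _ => True) ((crossB X Y).flip (Finsupp.single [] 1)) 0
    (fun l _ => by rw [LinearMap.flip_apply, crossB_single, cross_nil_right]; rfl)
    (mem_supp.2 (by simp))

/-- Augmented Leibniz rule for elementary paths. -/
theorem aug_leibniz {X Y : Type*} (n : ℕ) : ∀ (x : List X) (y : List Y) (a : X) (b : Y),
    x.length + y.length = n → (x ≠ [] ∨ y ≠ []) →
    augL (X × Y) (cross (a :: x) (b :: y)) =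
      crossB X Y (augD (a :: x)) (Finsupp.single (b :: y) 1) +
      (-1 : ℤ) ^ x.length • crossB X Y (Finsupp.single (a :: x) 1) (augD (b :: y)) := by
  induction n with
  | zero =>
    intro x y a b hn h
    exfalso
    rcases x with _ | _ <;> rcases y with _ | _ <;> simp_all
  | succ n ih =>
    intro x y a b hn h
    match x, y, h with
    | [], b2 :: ys, _ =>
      rw [augL_singleton_left a (by simp)]
      simp [augD, crossB_nil_left]
    | a2 :: xs, [], _ =>
      rw [augL_singleton_right b (by simp)]
      simp [augD, crossB_nil_right]
    | a2 :: xs, b2 :: ys, _ =>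
      have h1 := ih xs (b2 :: ys) a2 b (by simp at hn ⊢; omega) (Or.inr (by simp))
      have h2 := ih (a2 :: xs) ys a b2 (by simp at hn ⊢; omega) (Or.inl (by simp))
      have k1 := crossB_consL_left a b xs.length (b2 :: ys) (by simp) (w := augD (a2 :: xs))
        (by simpa using augD_mem (a2 :: xs))
      have k2 := crossB_consL_right a b (a2 :: xs) (by simp) (augD (b2 :: ys))
      rw [cross_cons a b _ _ (Or.inl (by simp)), map_add, map_smul, augL_consL, augL_consL, h1, h2,
        augD.eq_2 a, augD.eq_2 b, ]
      simp only [map_sub, LinearMap.sub_apply]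
      rw [k1, k2]
      simp only [map_add, map_sub, map_smul, LinearMap.sub_apply, crossB_single,
        List.length_cons, smul_add, smul_sub, smul_smul, pow_succ]
      have hs : ((-1 : ℤ) ^ xs.length) * ((-1 : ℤ) ^ xs.length) = 1 := by
        rw [← mul_pow]; simp
      simp only [mul_neg, neg_mul, mul_one, hs, neg_neg, one_smul, neg_smul, smul_neg]
      abel

theorem cross_mem {X Y : Type*} (adjX : X → X → Prop) (adjY : Y → Y → Prop)
    (n : ℕ) : ∀ (x : List X) (y : List Y) (a : X) (b : Y),
    x.length + y.length = n → (a :: x).Chain' adjX → (a :: x).Nodup → (b :: y).Chain' adjY →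
    (b :: y).Nodup →
    cross (a :: x) (b :: y) ∈ supp (fun z => z.length = n + 1 ∧ z.Chain' (prodAdj adjX adjY) ∧
      z.Nodup ∧ z.head? = some (a, b) ∧ ∀ t ∈ z, t.1 ∈ a :: x ∧ t.2 ∈ b :: y) := by
  induction n with
  | zero =>
    intro x y a b hn hx hx' hy hy'
    have hx0 : x = [] := List.length_eq_zero_iff.1 (by omega)
    have hy0 : y = [] := List.length_eq_zero_iff.1 (by omega)
    subst hx0 hy0
    rw [cross_singleton_left a (by simp)]
    exact single_mem_supp (by simp [List.Chain']) 1
  | succ n ih =>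
    intro x y a b hn hx hx' hy hy'
    rw [cross_cons a b x y (by rcases x with _ | _ <;> rcases y with _ | _ <;> simp_all)]
    refine Submodule.add_mem _ ?_ (Submodule.smul_mem _ _ ?_)
    · cases x with
      | nil => rw [cross_nil_left, map_zero]; exact Submodule.zero_mem _
      | cons a2 xs =>
        have hx2 := List.isChain_cons_cons.1 hx
        have hn2 := List.nodup_cons.1 hx'
        refine consL_mem _ ?_ (ih xs y a2 b (by simp at hn; omega) hx2.2 hn2.2 hy hy')
        rintro z ⟨z1, z2, z3, z4, z5⟩
        refine ⟨by simp [z1], ?_, ?_, by simp, ?_⟩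
        · refine List.isChain_cons.2 ⟨?_, z2⟩
          intro t ht
          rw [z4] at ht
          simp at ht
          subst ht
          exact Or.inr ⟨hx2.1, rfl⟩
        · exact List.nodup_cons.2 ⟨fun hm => hn2.1 (z5 _ hm).1, z3⟩
        · intro t ht
          rcases List.mem_cons.1 ht with rfl | ht
          · simp
          · exact ⟨List.mem_cons_of_mem _ (z5 t ht).1, (z5 t ht).2⟩
    · cases y with
      | nil => rw [cross_nil_right, map_zero]; exact Submodule.zero_mem _
      | cons b2 ys =>
        have hy2 := List.isChain_cons_cons.1 hy
        have hn2 := List.nodup_cons.1 hy'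
        refine consL_mem _ ?_ (ih x ys a b2 (by simp at hn; omega) hx hx' hy2.2 hn2.2)
        rintro z ⟨z1, z2, z3, z4, z5⟩
        refine ⟨by simp [z1], ?_, ?_, by simp, ?_⟩
        · refine List.isChain_cons.2 ⟨?_, z2⟩
          intro t ht
          rw [z4] at ht
          simp at ht
          subst ht
          exact Or.inl ⟨rfl, hy2.1⟩
        · exact List.nodup_cons.2 ⟨fun hm => hn2.1 (z5 _ hm).2, z3⟩
        · intro t ht
          rcases List.mem_cons.1 ht with rfl | ht
          · simp
          · exact ⟨(z5 t ht).1, List.mem_cons_of_mem _ (z5 t ht).2⟩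

theorem isA_iff {V : Type*} (adj : V → V → Prop) (n : ℕ) (u : List V →₀ ℤ) :
    IsA adj n u ↔ u ∈ supp (fun l => l.length = n + 1 ∧ l.Chain' adj ∧ l.Nodup) :=
  mem_supp.symm

theorem supp_mono {V : Type*} {P Q : List V → Prop} (h : ∀ l, P l → Q l)
    {u : List V →₀ ℤ} (hu : u ∈ supp P) : u ∈ supp Q :=
  mem_supp.2 fun l hl => h l (mem_supp.1 hu l hl)

theorem isA_crossB {X Y : Type*} (adjX : X → X → Prop) (adjY : Y → Y → Prop)
    (p q : ℕ) (u : List X →₀ ℤ) (v : List Y →₀ ℤ) (hu : IsA adjX p u) (hv : IsA adjY q v) :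
    IsA (prodAdj adjX adjY) (p + q) (crossB X Y u v) := by
  rw [isA_iff] at *
  refine supp_map ((crossB X Y).flip v) _ (fun x hx => ?_) hu
  rw [LinearMap.flip_apply]
  refine supp_map (crossB X Y (Finsupp.single x 1)) _ (fun y hy => ?_) hv
  rw [crossB_single]
  obtain ⟨hx1, hx2, hx3⟩ := hx
  obtain ⟨hy1, hy2, hy3⟩ := hy
  cases x with
  | nil => simp at hx1
  | cons a x =>
    cases y with
    | nil => simp at hy1
    | cons b y =>
      refine supp_mono ?_ (cross_mem adjX adjY (p + q) x y a b ?_ hx2 hx3 hy2 hy3)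
      · rintro l ⟨h1, h2, h3, -⟩
        exact ⟨h1, h2, h3⟩
      · simp at hx1 hy1; omega

theorem cross_length {X Y : Type*} (n : ℕ) : ∀ (x : List X) (y : List Y) (a : X) (b : Y),
    x.length + y.length = n →
    cross (a :: x) (b :: y) ∈ supp (fun z => z.length = n + 1) := by
  induction n with
  | zero =>
    intro x y a b hn
    have hx0 : x = [] := List.length_eq_zero_iff.1 (by omega)
    have hy0 : y = [] := List.length_eq_zero_iff.1 (by omega)
    subst hx0 hy0
    rw [cross_singleton_left a (by simp)]
    exact single_mem_supp (by simp) 1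
  | succ n ih =>
    intro x y a b hn
    rw [cross_cons a b x y (by rcases x with _ | _ <;> rcases y with _ | _ <;> simp_all)]
    refine Submodule.add_mem _ ?_ (Submodule.smul_mem _ _ ?_)
    · cases x with
      | nil => rw [cross_nil_left, map_zero]; exact Submodule.zero_mem _
      | cons a2 xs =>
        exact consL_mem _ (fun z hz => by simp [hz]) (ih xs y a2 b (by simp at hn; omega))
    · cases y with
      | nil => rw [cross_nil_right, map_zero]; exact Submodule.zero_mem _
      | cons b2 ys =>
        exact consL_mem _ (fun z hz => by simp [hz]) (ih x ys a b2 (by simp at hn; omega))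

theorem crossB_bdry_left {X Y : Type*} (x : List X) (v : List Y →₀ ℤ) :
    crossB X Y (bdry X (Finsupp.single x 1)) v = crossB X Y (augD x) v := by
  match x with
  | [] => simp [bdry_single, augD]
  | [a] => simp [bdry_single, augD, crossB_nil_left]
  | a :: b :: l => simp [bdry_single]

theorem crossB_bdry_right {X Y : Type*} (u : List X →₀ ℤ) (y : List Y) :
    crossB X Y u (bdry Y (Finsupp.single y 1)) = crossB X Y u (augD y) := by
  match y with
  | [] => simp [bdry_single, augD]
  | [a] => simp [bdry_single, augD, crossB_nil_right]
  | a :: b :: l => simp [bdry_single]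

/-- Leibniz rule for elementary paths. -/
theorem leibniz_single {X Y : Type*} (x : List X) (y : List Y) (p : ℕ) (hx : x.length = p + 1)
    (hy : y ≠ []) :
    bdry (X × Y) (cross x y) =
      crossB X Y (bdry X (Finsupp.single x 1)) (Finsupp.single y 1) +
      (-1 : ℤ) ^ p • crossB X Y (Finsupp.single x 1) (bdry Y (Finsupp.single y 1)) := by
  match x, y, hx, hy with
  | a :: x, b :: y, hx, _ =>
    have hp : x.length = p := by simpa using hx
    by_cases h : x ≠ [] ∨ y ≠ []
    · rw [crossB_bdry_left, crossB_bdry_right, ← hp, ← aug_leibniz _ x y a b rfl h]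
      refine bdry_eq_augL (supp_mono ?_ (cross_length _ x y a b rfl))
      intro l hl
      have : 0 < x.length + y.length := by
        rcases h with h | h <;> have := List.length_pos_iff.2 h <;> omega
      omega
    · push Not at h
      obtain ⟨rfl, rfl⟩ := h
      rw [cross_singleton_left a (by simp)]
      simp [bdry_single]

theorem leibniz_crossB {X Y : Type*} (adjX : X → X → Prop) (adjY : Y → Y → Prop)
    (p q : ℕ) (u : List X →₀ ℤ) (v : List Y →₀ ℤ) (hu : IsA adjX p u) (hv : IsA adjY q v) :
    bdry (X × Y) (crossB X Y u v) =
      crossB X Y (bdry X u) v + (-1 : ℤ) ^ p • crossB X Y u (bdry Y v) := by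
  rw [isA_iff] at hu hv
  refine supp_ext ((bdry (X × Y)).comp ((crossB X Y).flip v))
    (((crossB X Y).flip v).comp (bdry X) + (-1 : ℤ) ^ p • (crossB X Y).flip (bdry Y v))
    (fun x hx => ?_) hu
  simp only [LinearMap.add_apply, LinearMap.smul_apply, LinearMap.comp_apply, LinearMap.flip_apply]
  refine supp_ext ((bdry (X × Y)).comp (crossB X Y (Finsupp.single x 1)))
    (crossB X Y (bdry X (Finsupp.single x 1)) +
      (-1 : ℤ) ^ p • (crossB X Y (Finsupp.single x 1)).comp (bdry Y))
    (fun y hy => ?_) hv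
  simp only [LinearMap.add_apply, LinearMap.smul_apply, LinearMap.comp_apply, crossB_single]
  exact leibniz_single x y p hx.1 (by rintro rfl; simp at hy)

theorem bdry_zero_of_isA {V : Type*} (adj : V → V → Prop) (u : List V →₀ ℤ)
    (hu : IsA adj 0 u) : bdry V u = 0 := by
  rw [isA_iff] at hu
  refine supp_ext (bdry V) 0 (fun l hl => ?_) hu
  rw [bdry_single, if_neg (by omega)]
  rfl

/-- Leibniz rule for the cross product: for `u ∈ Ω_p(X;ℤ)` and `v ∈ Ω_q(Y;ℤ)`, the cross
product lies in `Ω_{p+q}(X ⊡ Y;ℤ)` and `∂(u × v) = (∂u) × v + (-1)^p u × (∂v)`. -/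
theorem cross_mem_omega_and_leibniz {X Y : Type*} (adjX : X → X → Prop) (adjY : Y → Y → Prop)
    (p q : ℕ) (u : List X →₀ ℤ) (v : List Y →₀ ℤ)
    (hu : IsOmega adjX p u) (hv : IsOmega adjY q v) :
    IsOmega (prodAdj adjX adjY) (p + q) (crossF u v) ∧
    bdry (X × Y) (crossF u v) =
      crossF (bdry X u) v + (-1 : ℤ) ^ p • crossF u (bdry Y v) := by
  simp only [crossF_eq]
  have hL := leibniz_crossB adjX adjY p q u v hu.1 hv.1
  refine ⟨⟨isA_crossB adjX adjY p q u v hu.1 hv.1, ?_⟩, hL⟩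
  rw [hL, isA_iff]
  refine Submodule.add_mem _ ?_ (Submodule.smul_mem _ _ ?_)
  · cases p with
    | zero =>
      rw [bdry_zero_of_isA adjX u hu.1, map_zero]
      exact Submodule.zero_mem _
    | succ p =>
      have := isA_crossB adjX adjY p q _ v hu.2 hv.1
      rw [isA_iff] at this
      convert this using 5
      omega
  · cases q with
    | zero =>
      rw [bdry_zero_of_isA adjY v hv.1, map_zero]
      exact Submodule.zero_mem _
    | succ q =>
      have := isA_crossB adjX adjY p q u _ hu.1 hv.2
      rw [isA_iff] at this
      exact this
end

section
/- Under the Cartesian product, ω_p × ω_q = ω_{p+q} in Ω_{p+q}(I^{⊡(p+q)};ℤ), identifying I^{⊡p} ⊡ I^{⊡q} with I^{⊡(p+q)} in the natural way. -/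
/-- The standard `n`-path `ω_n = Σ_{α ∈ E_n} (-1)^{σ(α)} e_α` in the `n`-cube `I^{⊡n}`:
allowed `n`-paths from `(0,…,0)` to `(1,…,1)` correspond to permutations `π` of the `n`
coordinates (flipping coordinate `π(k)` at step `k+1`), and the sign `(-1)^{σ(α)}` given by
the number of inversions is the sign of `π`. -/
noncomputable def stdOmega (n : ℕ) : List (Fin n → Bool) →₀ ℤ :=
  ∑ π : Equiv.Perm (Fin n),
    ((Equiv.Perm.sign π : ℤˣ) : ℤ) •
      Finsupp.single
        ((List.range (n + 1)).map fun k => fun i : Fin n => decide ((π⁻¹ i : Fin n).val < k))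
        (1 : ℤ)


namespace OmegaAux

open Finset

/-- Number of coordinates below `i` still to be flipped. -/
def ltc {n : ℕ} (v : Fin n → Bool) (i : Fin n) : ℕ :=
  ∑ j, if j < i ∧ v j = false then 1 else 0

/-- Number of coordinates still to be flipped. -/
def falses {n : ℕ} (v : Fin n → Bool) : ℕ := ∑ j, if v j = false then 1 else 0

/-- Signed sum of paths starting at `v` with `k` steps. -/
noncomputable def P {n : ℕ} : ℕ → (Fin n → Bool) → (List (Fin n → Bool) →₀ ℤ)
  | 0, v => Finsupp.single [v] 1
  | k + 1, v => Finsupp.lmapDomain ℤ ℤ (List.cons v)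
      (∑ i, if v i = false then (-1 : ℤ) ^ ltc v i • P k (Function.update v i true) else 0)

/-- chains of lists of length `m` -/
noncomputable def Len (X : Type*) (m : ℕ) : Submodule ℤ (List X →₀ ℤ) :=
  Submodule.span ℤ ((fun x => Finsupp.single x 1) '' {x : List X | x.length = m})

lemma single_mem_Len {X : Type*} (x : List X) : Finsupp.single x 1 ∈ Len X x.length :=
  Submodule.subset_span ⟨x, rfl, rfl⟩

lemma cons_mem_Len {X : Type*} (a : X) {m : ℕ} {u : List X →₀ ℤ} (hu : u ∈ Len X m) :
    Finsupp.lmapDomain ℤ ℤ (List.cons a) u ∈ Len X (m + 1) := by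
  induction hu using Submodule.span_induction with
  | mem x h =>
    obtain ⟨x, hx, rfl⟩ := h
    have := single_mem_Len (a :: x)
    simp only [Set.mem_ofPred_eq] at hx
    simpa [hx, Finsupp.mapDomain_single] using this
  | zero => simp
  | add x y _ _ hx hy => rw [map_add]; exact add_mem hx hy
  | smul c x _ hx => rw [map_smul]; exact Submodule.smul_mem _ _ hx

lemma P_mem {n : ℕ} (k : ℕ) (v : Fin n → Bool) : P k v ∈ Len _ (k + 1) := by
  induction k generalizing v with
  | zero => exact single_mem_Len [v]
  | succ k ih =>
    apply cons_mem_Len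
    refine Submodule.sum_mem _ fun i _ => ?_
    split_ifs
    · exact Submodule.smul_mem _ _ (ih _)
    · exact zero_mem _

/-- bilinear cross product -/
noncomputable def B (X Y : Type*) :
    (List X →₀ ℤ) →ₗ[ℤ] (List Y →₀ ℤ) →ₗ[ℤ] (List (X × Y) →₀ ℤ) :=
  Finsupp.linearCombination ℤ fun x => Finsupp.linearCombination ℤ fun y => cross x y

lemma crossF_eq {X Y : Type*} (u : List X →₀ ℤ) (v : List Y →₀ ℤ) : crossF u v = B X Y u v := by
  simp only [crossF, B, Finsupp.linearCombination_apply, Finsupp.sum, LinearMap.sum_apply,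
    LinearMap.smul_apply, Finset.smul_sum, mul_smul]

lemma B_single {X Y : Type*} (x : List X) (y : List Y) :
    B X Y (Finsupp.single x 1) (Finsupp.single y 1) = cross x y := by
  simp [B]

lemma B_cons_cons {X Y : Type*} (a : X) (b : Y) {m l : ℕ} {u : List X →₀ ℤ} {w : List Y →₀ ℤ}
    (hu : u ∈ Len X (m + 1)) (hw : w ∈ Len Y (l + 1)) :
    B X Y (Finsupp.lmapDomain ℤ ℤ (List.cons a) u) (Finsupp.lmapDomain ℤ ℤ (List.cons b) w) =
    Finsupp.lmapDomain ℤ ℤ (List.cons (a, b))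
      (B X Y u (Finsupp.lmapDomain ℤ ℤ (List.cons b) w) +
        (-1 : ℤ) ^ (m + 1) • B X Y (Finsupp.lmapDomain ℤ ℤ (List.cons a) u) w) := by
  induction hu using Submodule.span_induction with
  | mem x h =>
    obtain ⟨x, hx, rfl⟩ := h
    induction hw using Submodule.span_induction with
    | mem y h =>
      obtain ⟨y, hy, rfl⟩ := h
      match x, y, hx, hy with
      | a2 :: xs, b2 :: ys, hx, hy =>
        have hx' : xs.length = m := by simpa using hx
        simp only [Finsupp.lmapDomain_apply, Finsupp.mapDomain_single, B_single]
        rw [cross, hx', ← Finsupp.lmapDomain_apply ℤ ℤ, ← Finsupp.lmapDomain_apply ℤ ℤ,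
          ← Finsupp.lmapDomain_apply ℤ ℤ, map_add, map_smul]
    | zero => simp only [map_zero, smul_zero, add_zero]
    | add x y _ _ hx hy => simp only [map_add, smul_add] at hx hy ⊢; rw [hx, hy]; abel
    | smul c x _ hx =>
      simp only [map_smul, map_add] at hx ⊢; rw [hx, smul_add, smul_comm c]
  | zero => simp only [map_zero, LinearMap.zero_apply, smul_zero, add_zero]
  | add x y _ _ hx hy =>
    simp only [map_add, smul_add, LinearMap.add_apply] at hx hy ⊢; rw [hx, hy]; abel
  | smul c x _ hx =>
    simp only [map_smul, map_add, LinearMap.smul_apply] at hx ⊢; rw [hx, smul_add, smul_comm c]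

lemma B_nil_cons {X Y : Type*} (a : X) (b : Y) {l : ℕ} {w : List Y →₀ ℤ}
    (hw : w ∈ Len Y (l + 1)) :
    B X Y (Finsupp.single [a] 1) (Finsupp.lmapDomain ℤ ℤ (List.cons b) w) =
    Finsupp.lmapDomain ℤ ℤ (List.cons (a, b)) (B X Y (Finsupp.single [a] 1) w) := by
  induction hw using Submodule.span_induction with
  | mem y h =>
    obtain ⟨y, hy, rfl⟩ := h
    match y, hy with
    | b2 :: ys, hy =>
      simp only [Finsupp.lmapDomain_apply, Finsupp.mapDomain_single, B_single]
      simp [cross, Finsupp.mapDomain_single]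
  | zero => simp only [map_zero]
  | add x y _ _ hx hy => simp only [map_add] at hx hy ⊢; rw [hx, hy]
  | smul c x _ hx => simp only [map_smul] at hx ⊢; rw [hx]

lemma B_cons_nil {X Y : Type*} (a : X) (b : Y) {m : ℕ} {u : List X →₀ ℤ}
    (hu : u ∈ Len X (m + 1)) :
    B X Y (Finsupp.lmapDomain ℤ ℤ (List.cons a) u) (Finsupp.single [b] 1) =
    Finsupp.lmapDomain ℤ ℤ (List.cons (a, b)) (B X Y u (Finsupp.single [b] 1)) := by
  induction hu using Submodule.span_induction with
  | mem y h =>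
    obtain ⟨y, hy, rfl⟩ := h
    match y, hy with
    | [b2], hy =>
      simp only [Finsupp.lmapDomain_apply, Finsupp.mapDomain_single, B_single]
      simp [cross, Finsupp.mapDomain_single]
    | b2 :: b3 :: ys, hy =>
      simp only [Finsupp.lmapDomain_apply, Finsupp.mapDomain_single, B_single]
      simp [cross, Finsupp.mapDomain_single]
  | zero => simp only [map_zero, LinearMap.zero_apply]
  | add x y _ _ hx hy => simp only [map_add, LinearMap.add_apply] at hx hy ⊢; rw [hx, hy]
  | smul c x _ hx => simp only [map_smul, LinearMap.smul_apply] at hx ⊢; rw [hx]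

lemma ltc_castAdd {p q : ℕ} (v : Fin p → Bool) (w : Fin q → Bool) (i : Fin p) :
    ltc (Fin.append v w) (Fin.castAdd q i) = ltc v i := by
  unfold ltc
  rw [Fin.sum_univ_add]
  have : ∀ j : Fin q, ¬ (Fin.natAdd p j < Fin.castAdd q i) := by
    intro j; rw [Fin.lt_def]; simp; omega
  have h2 : ∀ j : Fin p, (Fin.castAdd q j < Fin.castAdd q i) ↔ j < i := fun j => Iff.rfl
  simp [this, h2]

lemma ltc_natAdd {p q : ℕ} (v : Fin p → Bool) (w : Fin q → Bool) (i : Fin q) :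
    ltc (Fin.append v w) (Fin.natAdd p i) = falses v + ltc w i := by
  unfold ltc falses
  rw [Fin.sum_univ_add]
  have : ∀ j : Fin p, (Fin.castAdd q j < Fin.natAdd p i) := by
    intro j; rw [Fin.lt_def]; simp; omega
  simp [this]

lemma falses_update {n : ℕ} (v : Fin n → Bool) (i : Fin n) (h : v i = false) {k : ℕ}
    (hk : falses v = k + 1) : falses (Function.update v i true) = k := by
  unfold falses at *
  rw [← Finset.add_sum_erase _ _ (Finset.mem_univ i)] at hk ⊢
  have : ∀ j ∈ univ.erase i, (if Function.update v i true j = false then 1 else 0) =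
      if v j = false then 1 else 0 := by
    intro j hj
    rw [Function.update_of_ne (Finset.ne_of_mem_erase hj)]
  rw [Finset.sum_congr rfl this]
  simp [h] at hk ⊢
  omega

lemma falses_zero {n : ℕ} (v : Fin n → Bool) (hk : falses v = 0) (i : Fin n) : v i = true := by
  unfold falses at hk
  rw [Finset.sum_eq_zero_iff] at hk
  have := hk i (mem_univ _)
  simpa using this

lemma append_update_left {p q : ℕ} (v : Fin p → Bool) (w : Fin q → Bool) (i : Fin p) :
    Function.update (Fin.append v w) (Fin.castAdd q i) true =
      Fin.append (Function.update v i true) w := by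
  ext j
  refine Fin.addCases (fun j => ?_) (fun j => ?_) j
  · simp [Function.update_apply]
  · have : Fin.natAdd p j ≠ Fin.castAdd q i := by
      rw [Ne, Fin.ext_iff]; simp; omega
    simp [Function.update_apply, this]

lemma append_update_right {p q : ℕ} (v : Fin p → Bool) (w : Fin q → Bool) (i : Fin q) :
    Function.update (Fin.append v w) (Fin.natAdd p i) true =
      Fin.append v (Function.update w i true) := by
  ext j
  refine Fin.addCases (fun j => ?_) (fun j => ?_) j
  · have : Fin.castAdd q j ≠ Fin.natAdd p i := by
      rw [Ne, Fin.ext_iff]; simp; omega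
    simp [Function.update_apply, this]
  · simp [Function.update_apply]

lemma P_append {p q : ℕ} (v : Fin p → Bool) (w : Fin q → Bool) (N : ℕ) :
    P (N + 1) (Fin.append v w) = Finsupp.lmapDomain ℤ ℤ (List.cons (Fin.append v w))
      ((∑ i, if v i = false then (-1 : ℤ) ^ ltc v i •
          P N (Fin.append (Function.update v i true) w) else 0) +
        (-1 : ℤ) ^ falses v • (∑ i, if w i = false then (-1 : ℤ) ^ ltc w i •
          P N (Fin.append v (Function.update w i true)) else 0)) := by
  rw [P, Fin.sum_univ_add]
  simp only [ltc_castAdd, ltc_natAdd, append_update_left, append_update_right,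
    Fin.append_left, Fin.append_right, Finset.smul_sum, smul_ite, smul_zero, smul_smul, pow_add]

/-- concatenation of coordinates on chains -/
noncomputable def M (p q : ℕ) :
    (List ((Fin p → Bool) × (Fin q → Bool)) →₀ ℤ) →ₗ[ℤ] (List (Fin (p + q) → Bool) →₀ ℤ) :=
  Finsupp.lmapDomain ℤ ℤ
    (List.map fun ab : (Fin p → Bool) × (Fin q → Bool) => Fin.append ab.1 ab.2)

lemma M_cons {p q : ℕ} (v : Fin p → Bool) (w : Fin q → Bool)
    (u : List ((Fin p → Bool) × (Fin q → Bool)) →₀ ℤ) :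
    M p q (Finsupp.lmapDomain ℤ ℤ (List.cons (v, w)) u) =
      Finsupp.lmapDomain ℤ ℤ (List.cons (Fin.append v w)) (M p q u) := by
  simp only [M, Finsupp.lmapDomain_apply, ← Finsupp.mapDomain_comp]
  rfl

lemma S_mem {n : ℕ} (k : ℕ) (v : Fin n → Bool) :
    (∑ i, if v i = false then (-1 : ℤ) ^ ltc v i • P k (Function.update v i true) else 0)
      ∈ Len _ (k + 1) := by
  refine Submodule.sum_mem _ fun i _ => ?_
  split_ifs
  · exact Submodule.smul_mem _ _ (P_mem _ _)
  · exact zero_mem _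

lemma main {p q : ℕ} (N k l : ℕ) (hN : k + l = N) (v : Fin p → Bool) (w : Fin q → Bool)
    (hv : falses v = k) (hw : falses w = l) :
    M p q (B _ _ (P k v) (P l w)) = P N (Fin.append v w) := by
  induction N generalizing k l v w with
  | zero =>
    obtain ⟨rfl, rfl⟩ : k = 0 ∧ l = 0 := by omega
    simp [P, B_single, cross, M, Finsupp.mapDomain_single]
  | succ N ih =>
    rw [P_append]
    have left : ∀ k', k = k' + 1 → M p q (B _ _ (∑ i, if v i = false then (-1 : ℤ) ^ ltc v i •
        P k' (Function.update v i true) else 0) (P l w)) = ∑ i, if v i = false then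
        (-1 : ℤ) ^ ltc v i • P N (Fin.append (Function.update v i true) w) else 0 := by
      intro k' hk
      simp only [map_sum, LinearMap.sum_apply]
      refine Finset.sum_congr rfl fun i _ => ?_
      split_ifs with h
      · rw [map_smul, LinearMap.smul_apply, map_smul,
          ih k' l (by omega) _ _ (falses_update v i h (by omega)) hw]
      · simp
    have right : ∀ l', l = l' + 1 → M p q (B _ _ (P k v) (∑ i, if w i = false then
        (-1 : ℤ) ^ ltc w i • P l' (Function.update w i true) else 0)) = ∑ i, if w i = false then
        (-1 : ℤ) ^ ltc w i • P N (Fin.append v (Function.update w i true)) else 0 := by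
      intro l' hl
      simp only [map_sum]
      refine Finset.sum_congr rfl fun i _ => ?_
      split_ifs with h
      · rw [map_smul, map_smul,
          ih k l' (by omega) _ _ hv (falses_update w i h (by omega))]
      · simp
    match k, l with
    | 0, 0 => omega
    | 0, l + 1 =>
      have h0 : ∀ i, v i = true := falses_zero v hv
      rw [← right l rfl, hv]
      simp only [h0, Bool.true_eq_false, if_false, Finset.sum_const_zero, zero_add, pow_zero, one_smul]
      rw [P, P, B_nil_cons _ _ (S_mem l w), M_cons]
    | k + 1, 0 =>
      have h0 : ∀ i, w i = true := falses_zero w hw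
      rw [← left k rfl]
      simp only [h0, Bool.true_eq_false, if_false, Finset.sum_const_zero, add_zero, smul_zero]
      rw [P, P, B_cons_nil _ _ (S_mem k v), M_cons]
    | k + 1, l + 1 =>
      rw [← left k rfl, ← right l rfl, hv]
      conv_lhs => rw [P, P]
      rw [B_cons_cons _ _ (S_mem k v) (S_mem l w), M_cons, map_add, map_smul]
      rfl

/-- the path through the vertices obtained from `v` by flipping `f 0, f 1, …`. -/
def path {n k : ℕ} (v : Fin n → Bool) (f : Fin k → Fin n) : List (Fin n → Bool) :=
  (List.range (k + 1)).map fun t => fun i => v i || decide (∃ j : Fin k, j.val < t ∧ f j = i)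

lemma path_succ {n k : ℕ} (v : Fin n → Bool) (f : Fin (k + 1) → Fin n) :
    path v f = v :: path (Function.update v (f 0) true) (fun j => f j.succ) := by
  unfold path
  rw [List.range_succ_eq_map, List.map_cons, List.map_map]
  congr 1
  · simp
  · refine List.map_congr_left fun t _ => ?_
    funext i
    simp only [Function.comp, Fin.exists_fin_succ, Function.update_apply]
    by_cases h : i = f 0
    · subst h; simp
    · have h' : ¬ f 0 = i := fun e => h e.symm
      simp [h, h']

/-- permutation with given image of `0`. -/
def mk {k : ℕ} : Fin (k + 1) × Equiv.Perm (Fin k) → Equiv.Perm (Fin (k + 1)) :=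
  fun x => x.1.cycleRange.symm * Equiv.Perm.decomposeFin.symm (0, x.2)

lemma mk_zero {k : ℕ} (i : Fin (k + 1)) (σ : Equiv.Perm (Fin k)) : mk (i, σ) 0 = i := by
  simp [mk, Fin.cycleRange_symm_zero]

lemma mk_succ {k : ℕ} (i : Fin (k + 1)) (σ : Equiv.Perm (Fin k)) (j : Fin k) :
    mk (i, σ) j.succ = i.succAbove (σ j) := by
  simp [mk, Fin.cycleRange_symm_succ]

lemma sign_mk {k : ℕ} (i : Fin (k + 1)) (σ : Equiv.Perm (Fin k)) :
    ((Equiv.Perm.sign (mk (i, σ)) : ℤˣ) : ℤ) = (-1) ^ (i : ℕ) * (Equiv.Perm.sign σ : ℤˣ) := by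
  simp [mk, Fin.sign_cycleRange, Equiv.Perm.decomposeFin.symm_sign]

lemma mk_bij {k : ℕ} : Function.Bijective (mk (k := k)) := by
  rw [Fintype.bijective_iff_injective_and_card]
  constructor
  · rintro ⟨i, σ⟩ ⟨j, τ⟩ h
    have h0 : i = j := by rw [← mk_zero i σ, h, mk_zero]
    subst h0
    congr 1
    ext x
    have := congrArg (fun e => e x.succ) h
    simp only [mk_succ] at this
    rw [Fin.succAbove_right_injective this]
  · simp [Fintype.card_perm, Nat.factorial_succ]

lemma ltc_eq {n k : ℕ} (v : Fin n → Bool) (e : Fin k → Fin n) (he : StrictMono e)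
    (hv : ∀ i, v i = false ↔ ∃ j, e j = i) (i : Fin k) : ltc v (e i) = i := by
  unfold ltc
  rw [← Finset.card_filter]
  have : (univ.filter fun j => j < e i ∧ v j = false) = (Finset.Iio i).image e := by
    ext j
    simp only [mem_filter, mem_univ, true_and, mem_image, mem_Iio, hv]
    constructor
    · rintro ⟨h, a, rfl⟩; exact ⟨a, he.lt_iff_lt.1 h, rfl⟩
    · rintro ⟨a, h, rfl⟩; exact ⟨he h, a, rfl⟩
  rw [this, Finset.card_image_of_injective _ he.injective, Fin.card_Iio]

lemma perm_sum {n k : ℕ} (v : Fin n → Bool) (e : Fin k → Fin n) (he : StrictMono e)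
    (hv : ∀ i, v i = false ↔ ∃ j, e j = i) :
    ∑ π : Equiv.Perm (Fin k), ((Equiv.Perm.sign π : ℤˣ) : ℤ) •
      Finsupp.single (path v (fun j => e (π j))) (1 : ℤ) = P k v := by
  induction k generalizing v with
  | zero => simp [P, path]
  | succ k ih =>
    rw [← Equiv.sum_comp (Equiv.ofBijective mk mk_bij), Fintype.sum_prod_type, P, map_sum]
    have key : ∀ i : Fin (k + 1), ∑ σ : Equiv.Perm (Fin k),
        ((Equiv.Perm.sign (mk (i, σ)) : ℤˣ) : ℤ) •
          Finsupp.single (path v (fun j => e (mk (i, σ) j))) (1 : ℤ) =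
        Finsupp.lmapDomain ℤ ℤ (List.cons v)
          ((-1 : ℤ) ^ ltc v (e i) • P k (Function.update v (e i) true)) := by
      intro i
      rw [← ih (Function.update v (e i) true) (fun j => e (i.succAbove j))
        (he.comp (Fin.strictMono_succAbove i)), ltc_eq v e he hv, map_smul, map_sum,
        Finset.smul_sum]
      · refine Finset.sum_congr rfl fun σ _ => ?_
        rw [map_smul, smul_smul, sign_mk, path_succ]
        simp only [mk_zero, mk_succ, Finsupp.lmapDomain_apply, Finsupp.mapDomain_single]
      · intro x
        by_cases hx : x = e i
        · subst hx
          simp [he.injective.eq_iff, Fin.succAbove_ne]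
        · rw [Function.update_of_ne hx, hv]
          constructor
          · rintro ⟨j, rfl⟩
            have hji : j ≠ i := fun h => hx (by rw [h])
            obtain ⟨j', hj'⟩ := Fin.exists_succAbove_eq hji
            exact ⟨j', by rw [hj']⟩
          · rintro ⟨j, rfl⟩; exact ⟨_, rfl⟩
    simp only [Equiv.ofBijective_apply]
    rw [Finset.sum_congr rfl fun i _ => key i]
    rw [← Finset.sum_image (s := univ) (g := e) (f := fun x => Finsupp.lmapDomain ℤ ℤ (List.cons v)
          ((-1 : ℤ) ^ ltc v x • P k (Function.update v x true))) he.injective.injOn]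
    have : univ.image e = univ.filter fun x => v x = false := by
      ext x; simp [hv]
    rw [this, Finset.sum_filter]
    refine Finset.sum_congr rfl fun x _ => ?_
    split_ifs
    · rfl
    · simp

lemma stdOmega_eq (n : ℕ) : stdOmega n = P n (fun _ => false) := by
  rw [← perm_sum (fun _ => false) (id : Fin n → Fin n) strictMono_id (by simp)]
  unfold stdOmega path
  refine Finset.sum_congr rfl fun π _ => ?_
  congr 2
  refine List.map_congr_left fun t _ => ?_
  funext i
  simp only [Bool.false_or, id, decide_eq_decide]
  constructor
  · intro h; exact ⟨_, h, by simp⟩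
  · rintro ⟨j, h, rfl⟩; simpa using h

end OmegaAux

/-- `ω_p × ω_q = ω_{p+q}`, identifying `I^{⊡p} ⊡ I^{⊡q}` with `I^{⊡(p+q)}` via concatenation
of the coordinate strings (`Fin.append`). -/
theorem stdOmega_cross_stdOmega (p q : ℕ) :
    Finsupp.mapDomain
        (List.map fun ab : (Fin p → Bool) × (Fin q → Bool) => Fin.append ab.1 ab.2)
        (crossF (stdOmega p) (stdOmega q)) = stdOmega (p + q) := by

  rw [OmegaAux.crossF_eq, OmegaAux.stdOmega_eq, OmegaAux.stdOmega_eq, OmegaAux.stdOmega_eq]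
  have h := OmegaAux.main (p + q) p q rfl (fun _ : Fin p => false) (fun _ : Fin q => false)
    (by simp [OmegaAux.falses]) (by simp [OmegaAux.falses])
  have e : Fin.append (fun _ : Fin p => false) (fun _ : Fin q => false) = fun _ => false := by
    funext j
    refine Fin.addCases (fun j => ?_) (fun j => ?_) j <;> simp
  rw [e] at h
  exact h
end
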